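/- Let t, k, d, m be positive integers with dt < k, let F be a finite field, and let b ≥ log_{|F|}(k) be an integer. Set ℓ = b(k − dt). Then there is a t-private, k-server linear HSS for POLY_{d,m}(F)^ℓ, in which Share is t-private k-party CNF sharing over F, with download rate at least 1 − dt/k. -/

import Mathlib

/-!
CNF sharing is `t`-private because the servers of a set `T` with `|T| ≤ t` all miss the summand
`x_S` of any `t`-set `S ⊇ T`, and shifting that summand matches the sharings of `x` with those of
`x'` (`cnfPrivate_of_le`).

For the scheme, substitute `x_q = ∑_S x_{q,S}` in a polynomial `f` of degree at most `d`. Every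
monomial of the result involves at most `d` of the sets `S`, so their union is contained in a set
`U` of exactly `dt` servers, and the `k - dt` servers outside `U` all know every variable of the
monomial. Grouping the monomials by `U` gives `f(x) = ∑_U g_U`, where each `g_U` can be computed
by every server outside `U` (`localPart`).

The remaining ingredient is a linear map that recovers the `b(k - dt)` values from `b` symbols per
server and is still onto when the servers of any `dt`-set `U` send zero
(`exists_linear_rec`). Over the extension `E/F` of degree `b`, which has at least `k` elements,
pick distinct `α_j` and take `v ↦ (∑_j α_j ^ r v_j)_{r < k - dt}`: any `k - dt` of the columns form
an invertible Vandermonde matrix. The servers outside `U` then send a preimage of the tuple of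
values `g_U`, and the contributions of the different `U` are added up.
-/

open scoped BigOperators

/-- The index type for the `t`-element subsets of `[k]`. -/
abbrev TSubset (k t : ℕ) : Type := {S : Finset (Fin k) // S.card = t}

/-- `t`-privacy of `t`-private `k`-party CNF sharing. -/
def CNFPrivate (F : Type) [Field F] [Fintype F] (k t : ℕ) : Prop :=
  ∀ T : Finset (Fin k), T.card ≤ t → ∀ x x' : F,
    ∀ v : {S : TSubset k t // ∃ j ∈ T, j ∉ S.1} → F,
      Nat.card {xs : TSubset k t → F //
          (∑ S, xs S = x) ∧ ∀ S : {S : TSubset k t // ∃ j ∈ T, j ∉ S.1}, xs S.1 = v S} =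
        Nat.card {xs : TSubset k t → F //
          (∑ S, xs S = x') ∧ ∀ S : {S : TSubset k t // ∃ j ∈ T, j ∉ S.1}, xs S.1 = v S}

theorem cnfPrivate_of_le (F : Type) [Field F] [Fintype F] {k t : ℕ} (htk : t ≤ k) :
    CNFPrivate F k t := by
  classical
  intro T hT x x' v
  obtain ⟨S, hTS, hS⟩ := Finset.exists_superset_card_eq hT (by simpa using htk)
  let S₀ : TSubset k t := ⟨S, hS⟩
  have hne : ∀ R : {R : TSubset k t // ∃ j ∈ T, j ∉ R.1}, R.1 ≠ S₀ := by
    rintro ⟨R, j, hj, hjR⟩ rfl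
    exact hjR (hTS hj)
  refine Nat.card_congr
    ((Equiv.addRight (Pi.single S₀ (x' - x) : TSubset k t → F)).subtypeEquiv ?_)
  intro xs
  have hsum : ∑ R, (Pi.single S₀ (x' - x) : TSubset k t → F) R = x' - x :=
    Finset.sum_pi_single' .. |>.trans (by simp)
  refine and_congr ?_ (forall_congr' fun R => ?_)
  · simp only [Equiv.coe_addRight, Pi.add_apply, Finset.sum_add_distrib, hsum]
    constructor
    · rintro rfl
      ring
    · intro h
      linear_combination h
  · simp [hne R]

/-- A Vandermonde map with distinct nodes is onto when the coordinates in a set `U` of size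
`k - n` are forced to vanish. -/
theorem exists_vandermonde_preimage {E : Type*} [Field E] {k n : ℕ} (α : Fin k → E)
    (hα : Function.Injective α) (U : Finset (Fin k)) (hU : U.card + n = k) (y : Fin n → E) :
    ∃ v : Fin k → E, (∀ j ∈ U, v j = 0) ∧ ∀ r : Fin n, ∑ j, α j ^ (r : ℕ) * v j = y r := by
  classical
  have hcard : (Uᶜ).card = n := by
    rw [Finset.card_compl, Fintype.card_fin]
    omega
  let e : Fin n ↪o Fin k := (Uᶜ).orderEmbOfFin hcard
  let V := (Matrix.vandermonde (α ∘ e)).transpose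
  have hV : IsUnit V.det := by
    rw [Matrix.det_transpose]
    exact (Matrix.det_vandermonde_ne_zero_iff.2 (hα.comp e.injective)).isUnit
  let u := V⁻¹.mulVec y
  have hu : V.mulVec u = y := by
    simp [u, Matrix.mulVec_mulVec, Matrix.mul_nonsing_inv _ hV]
  have hmem : ∀ i, e i ∉ U := fun i =>
    Finset.mem_compl.1 ((Uᶜ).orderEmbOfFin_mem hcard i)
  refine ⟨Function.extend e u 0, fun j hj => ?_, fun r => ?_⟩
  · rw [Function.extend_apply']
    · rfl
    · rintro ⟨i, rfl⟩
      exact hmem i hj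
  · have h := congrFun hu r
    rw [← h]
    simp only [Matrix.mulVec, dotProduct, V, Matrix.transpose_apply, Matrix.vandermonde_apply,
      Function.comp_apply]
    symm
    refine Finset.sum_of_injOn e e.injective.injOn (by simp) ?_ ?_
    · intro j _ hj
      rw [Function.extend_apply']
      · simp
      · rintro ⟨i, rfl⟩
        exact hj ⟨i, by simp, rfl⟩
    · intro i _
      rw [e.injective.extend_apply]

/-- The reconstruction map: an `F`-linear map reading `b` symbols from each of `k` servers that
hits every vector of length `b * n` even when the servers of a prescribed set of size `k - n`
send zero. -/
theorem exists_linear_rec (F : Type) [Field F] [Fintype F] {k n b : ℕ} (hb0 : 0 < b)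
    (hb : k ≤ Fintype.card F ^ b) :
    ∃ Rec : (Fin k → Fin b → F) →ₗ[F] (Fin (b * n) → F),
      ∀ U : Finset (Fin k), U.card + n = k → ∀ y, ∃ v, (∀ j ∈ U, v j = 0) ∧ Rec v = y := by
  classical
  obtain ⟨p, hp⟩ := CharP.exists F
  have : Fact p.Prime := ⟨CharP.char_is_prime F p⟩
  have : NeZero b := ⟨hb0.ne'⟩
  let E := FiniteField.Extension F p b
  have : Fintype E := Fintype.ofFinite E
  have hE : Module.finrank F E = b := FiniteField.finrank_extension F p b
  have hcard : Fintype.card (Fin k) ≤ Fintype.card E := by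
    rw [Fintype.card_fin, Fintype.card_eq_nat_card, FiniteField.natCard_extension,
      ← Fintype.card_eq_nat_card]
    exact hb
  obtain ⟨α⟩ := Function.Embedding.nonempty_of_card_le hcard
  let e₁ : (Fin b → F) ≃ₗ[F] E := LinearEquiv.ofFinrankEq _ _ (by simp [hE])
  let e₂ : (Fin n → E) ≃ₗ[F] (Fin (b * n) → F) := LinearEquiv.ofFinrankEq _ _ (by
    rw [Module.finrank_pi_fintype]
    simp [hE, mul_comm])
  let R : (Fin k → Fin b → F) →ₗ[F] (Fin n → E) := LinearMap.pi fun r =>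
    ∑ j, (LinearMap.mulLeft F (α j ^ (r : ℕ))).comp (e₁.toLinearMap.comp (LinearMap.proj j))
  refine ⟨e₂.toLinearMap.comp R, fun U hU y => ?_⟩
  obtain ⟨v, hv0, hv⟩ := exists_vandermonde_preimage α α.injective U hU (e₂.symm y)
  refine ⟨fun j => e₁.symm (v j), fun j hj => by simp [hv0 j hj], ?_⟩
  have hR : R (fun j => e₁.symm (v j)) = e₂.symm y := by
    funext r
    simp [R, hv r]
  simp [hR]

/-- The polynomial in the CNF summands `x_{q,S}` obtained from `f` by substituting
`x_q = ∑_S x_{q,S}`. -/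
noncomputable def expandCNF {F : Type} [Field F] {m : ℕ} (k t : ℕ)
    (f : MvPolynomial (Fin m) F) : MvPolynomial (Fin m × TSubset k t) F :=
  MvPolynomial.aeval (fun q => ∑ S : TSubset k t, MvPolynomial.X (q, S)) f

theorem eval_expandCNF {F : Type} [Field F] {m k t : ℕ} (f : MvPolynomial (Fin m) F)
    (z : Fin m × TSubset k t → F) :
    MvPolynomial.eval z (expandCNF k t f) =
      MvPolynomial.eval (fun q => ∑ S : TSubset k t, z (q, S)) f := by
  unfold expandCNF
  induction f using MvPolynomial.induction_on with
  | C a => simp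
  | add p q hp hq => rw [map_add, map_add, map_add, hp, hq]
  | mul_X p q hp => rw [map_mul, map_mul, map_mul, hp]; simp

theorem totalDegree_expandCNF_le {F : Type} [Field F] {m k t : ℕ} (f : MvPolynomial (Fin m) F) :
    (expandCNF k t f).totalDegree ≤ f.totalDegree := by
  unfold expandCNF
  rw [MvPolynomial.aeval_def, MvPolynomial.eval₂_eq]
  refine MvPolynomial.totalDegree_finsetSum_le fun v hv => ?_
  refine (MvPolynomial.totalDegree_mul _ _).trans ?_
  rw [MvPolynomial.algebraMap_eq, MvPolynomial.totalDegree_C, zero_add]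
  refine (MvPolynomial.totalDegree_finsetProd _ _).trans ?_
  refine le_trans (Finset.sum_le_sum fun q _ => ?_) (MvPolynomial.le_totalDegree hv)
  refine (MvPolynomial.totalDegree_pow _ _).trans ?_
  refine (Nat.mul_le_mul_left _ (MvPolynomial.totalDegree_finsetSum_le (d := 1)
    fun S _ => ?_)).trans (mul_one _).le
  rw [MvPolynomial.totalDegree_X]

/-- A monomial of degree at most `d` in the CNF summands is known to all servers outside some set
of exactly `d * t` servers. -/
theorem exists_blind_set {m k t d : ℕ} (hdtk : d * t ≤ k)
    (v : Fin m × TSubset k t →₀ ℕ) (hv : (v.sum fun _ e => e) ≤ d) :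
    ∃ U : Finset (Fin k), U.card = d * t ∧ ∀ a ∈ v.support, a.2.1 ⊆ U := by
  classical
  have hsupp : v.support.card ≤ d := by
    refine le_trans ?_ hv
    rw [Finsupp.sum, Finset.card_eq_sum_ones]
    exact Finset.sum_le_sum fun a ha => Nat.one_le_iff_ne_zero.2 (Finsupp.mem_support_iff.1 ha)
  have hcard : (v.support.biUnion fun a => a.2.1).card ≤ d * t :=
    (Finset.card_biUnion_le_card_mul _ _ t fun a _ => a.2.2.le).trans
      (Nat.mul_le_mul_right t hsupp)
  obtain ⟨U, hU, hUc⟩ := Finset.exists_superset_card_eq hcard (by simpa using hdtk)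
  exact ⟨U, hUc, fun a ha =>
    (Finset.subset_biUnion_of_mem (fun a : Fin m × TSubset k t => a.2.1) ha).trans hU⟩

/-- The value at `z` of the monomials of `p` that the labelling `c` assigns to `U`. -/
noncomputable def localPart {F : Type} [Field F] {σ ι : Type} [DecidableEq ι] (c : (σ →₀ ℕ) → ι)
    (p : MvPolynomial σ F) (U : ι) (z : σ → F) : F :=
  ∑ v ∈ p.support with c v = U, p.coeff v * ∏ a ∈ v.support, z a ^ v a

theorem sum_localPart {F : Type} [Field F] {σ ι : Type} [DecidableEq ι] [Fintype ι]
    (c : (σ →₀ ℕ) → ι) (p : MvPolynomial σ F) (z : σ → F) :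
    ∑ U, localPart c p U z = MvPolynomial.eval z p := by
  rw [MvPolynomial.eval_eq]
  exact Finset.sum_fiberwise _ _ _

/-- **Optimal-rate CNF-based linear HSS for low-degree polynomials.**
For positive integers `t, k, d, m` with `d*t < k`, a finite field `F`, and an integer
`b ≥ log_{|F|} k` (i.e. `k ≤ |F|^b`), setting `ℓ = b(k − dt)`, there is a `t`-private
`k`-server linear HSS for `POLY_{d,m}(F)^ℓ` in which each input is shared via `t`-private
`k`-party CNF sharing over `F` (which is `t`-private), correctness holds for every additive
CNF sharing of each input, reconstruction is `F`-linear, and the download rate is at least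
`1 − dt/k`. -/
theorem cnf_hss_rate_one_minus_dt_over_k (F : Type) [Field F] [Fintype F]
    (t k d m b : ℕ) (ht : 0 < t) (hk : 0 < k) (hd : 0 < d) (hm : 0 < m) (hbpos : 0 < b)
    (hdtk : d * t < k) (hb : k ≤ Fintype.card F ^ b) :
    CNFPrivate F k t ∧
    ∃ (bs : Fin k → ℕ)
      (Eval : ∀ j : Fin k,
        (Fin (b * (k - d * t)) → {f : MvPolynomial (Fin m) F // f.totalDegree ≤ d}) →
        (Fin (b * (k - d * t)) → Fin m → ({S : TSubset k t // j ∉ S.1} → F)) →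
        (Fin (bs j) → F))
      (Rec : (∀ j : Fin k, Fin (bs j) → F) →ₗ[F] (Fin (b * (k - d * t)) → F)),
      (∀ (f : Fin (b * (k - d * t)) → {f : MvPolynomial (Fin m) F // f.totalDegree ≤ d})
        (x : Fin (b * (k - d * t)) → Fin m → F)
        (xs : Fin (b * (k - d * t)) → Fin m → TSubset k t → F),
        (∀ i q, ∑ S, xs i q S = x i q) →
        Rec (fun j => Eval j f (fun i q S => xs i q S.1)) =
          fun i => MvPolynomial.eval (x i) (f i).1) ∧
      1 - (d * t : ℚ) / (k : ℚ) ≤ ((b * (k - d * t) : ℕ) : ℚ) / (∑ j, (bs j : ℚ)) := by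
  classical
  refine ⟨cnfPrivate_of_le F ((Nat.le_mul_of_pos_left t hd).trans hdtk.le), fun _ => b, ?_⟩
  obtain ⟨Rec, hRec⟩ := exists_linear_rec F (k := k) (n := k - d * t) hbpos hb
  have hsolve : ∀ (U : TSubset k (d * t)) (y : Fin (b * (k - d * t)) → F),
      ∃ v : Fin k → Fin b → F, (∀ j ∈ U.1, v j = 0) ∧ Rec v = y :=
    fun U y => hRec U.1 (by rw [U.2]; omega) y
  choose sol hsol0 hsol using hsolve
  -- On monomials of degree above `d` the value of the labelling `c` is irrelevant.
  have hlabel : ∀ v : Fin m × TSubset k t →₀ ℕ, ∃ U : TSubset k (d * t),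
      (v.sum fun _ e => e) ≤ d → ∀ a ∈ v.support, a.2.1 ⊆ U.1 := by
    intro v
    by_cases hv : (v.sum fun _ e => e) ≤ d
    · obtain ⟨U, hU, h⟩ := exists_blind_set hdtk.le v hv
      exact ⟨⟨U, hU⟩, fun _ => h⟩
    · obtain ⟨U, -, hU⟩ := Finset.exists_superset_card_eq (s := (∅ : Finset (Fin k)))
        (n := d * t) (by simp) (by simpa using hdtk.le)
      exact ⟨⟨U, hU⟩, fun h => absurd h hv⟩
  choose c hc using hlabel
  -- Server `j` sets the summands it does not hold to zero; its answer does not involve them.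
  refine ⟨fun j f sh => ∑ U : TSubset k (d * t), sol U (fun i =>
      localPart c (expandCNF k t (f i).1) U
        fun a => if h : j ∉ a.2.1 then sh i a.1 ⟨a.2, h⟩ else 0) j, Rec, ?_, ?_⟩
  · intro f x xs hx
    have hlocal : ∀ (j : Fin k) (U : TSubset k (d * t)), j ∉ U.1 → ∀ i,
        localPart c (expandCNF k t (f i).1) U
          (fun a => if j ∉ a.2.1 then xs i a.1 a.2 else 0) =
        localPart c (expandCNF k t (f i).1) U (fun a => xs i a.1 a.2) := by
      intro j U hj i
      refine Finset.sum_congr rfl fun v hv => ?_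
      rw [Finset.mem_filter] at hv
      have hdeg : (v.sum fun _ e => e) ≤ d :=
        (MvPolynomial.le_totalDegree hv.1).trans
          ((totalDegree_expandCNF_le (f i).1).trans (f i).2)
      congr 1
      refine Finset.prod_congr rfl fun a ha => ?_
      have hja : j ∉ a.2.1 := fun h => hj (hv.2 ▸ hc v hdeg a ha h)
      simp only [if_pos hja]
    have hanswers : (fun j => ∑ U : TSubset k (d * t), sol U (fun i =>
          localPart c (expandCNF k t (f i).1) U
            fun a => if _h : j ∉ a.2.1 then xs i a.1 a.2 else 0) j) =
        ∑ U : TSubset k (d * t), sol U (fun i =>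
          localPart c (expandCNF k t (f i).1) U fun a => xs i a.1 a.2) := by
      funext j
      rw [Finset.sum_apply]
      refine Finset.sum_congr rfl fun U _ => ?_
      by_cases hj : j ∈ U.1
      · rw [hsol0 U _ j hj, hsol0 U _ j hj]
      · simp only [dite_eq_ite]
        rw [funext (hlocal j U hj)]
    refine (congrArg Rec hanswers).trans ?_
    rw [map_sum]
    funext i
    simp only [hsol, Finset.sum_apply]
    rw [sum_localPart, eval_expandCNF]
    simp only [hx]
  · have hk' : (k : ℚ) ≠ 0 := by exact_mod_cast hk.ne'
    have hb' : (b : ℚ) ≠ 0 := by exact_mod_cast hbpos.ne'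
    apply le_of_eq
    rw [Finset.sum_const, Finset.card_univ, Fintype.card_fin, nsmul_eq_mul, Nat.cast_mul,
      Nat.cast_sub hdtk.le, Nat.cast_mul]
    field_simp
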